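/- arXiv:1309.7634 — 3 statements merged into one kernel-verified Lean document; each statement's English description precedes it below -/
import Mathlib

section
/- Let m ≥ 2, let F be an averaging operator, and let f : 𝕋_m → ℝ be bounded. If u : 𝕋_m × [0,∞) → ℝ is bounded, continuous in t for each x, and satisfies u = K_f u on 𝕋_m × [0,∞), then |u(x,t)| ≤ sup_{y ∈ 𝕋_m} |f(y)| for all (x,t) ∈ 𝕋_m × [0,∞). -/
/-!
The maximum principle: if `f ≤ b ≤ c` and `u ≤ c` on `V × [0, T]`, then a subsolution `u ≤ K_f u` is
at most the convex combination `(1 - e^{-T}) c + e^{-T} b` there, because the kernel `e^{z-t} dz` on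
`[0, t]` has mass `1 - e^{-t}`. The supremum `c` of `u` over `V × [0, T]` therefore cannot exceed
`b`. The lower bound is the same statement for `-u` and the conjugate operator `v ↦ -A(-v)`.
-/

open MeasureTheory Real

/-- `F : ℝ^m → ℝ` is an averaging operator: continuous, `F(0,…,0)=0`, `F(1,…,1)=1`,
positively homogeneous, translation equivariant, strictly below the max when the
coordinates are not all equal, and nondecreasing in each variable. -/
def IsAveraging (m : ℕ) (F : (Fin m → ℝ) → ℝ) : Prop :=
  Continuous F ∧
  F (fun _ => 0) = 0 ∧
  F (fun _ => 1) = 1 ∧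
  (∀ (t : ℝ) (x : Fin m → ℝ), F (fun j => t * x j) = t * F x) ∧
  (∀ (t : ℝ) (x : Fin m → ℝ), F (fun j => t + x j) = t + F x) ∧
  (∀ x : Fin m → ℝ, (∃ i j, x i ≠ x j) → F x < ⨆ j, x j) ∧
  (∀ x y : Fin m → ℝ, (∀ j, x j ≤ y j) → F x ≤ F y)

/-- The operator `K_f u(x,t) = ∫₀ᵗ e^{z−t} F(u((x,0),z),…,u((x,m−1),z)) dz + e^{−t} f(x)`,
where vertices of the directed tree `𝕋_m` are modeled as lists over `Fin m`
and `(x,i)` is the successor `x ++ [i]`. -/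
noncomputable def Kop (m : ℕ) (F : (Fin m → ℝ) → ℝ) (f : List (Fin m) → ℝ)
    (u : List (Fin m) → ℝ → ℝ) (x : List (Fin m)) (t : ℝ) : ℝ :=
  (∫ z in (0:ℝ)..t, Real.exp (z - t) * F (fun i => u (x ++ [i]) z)) +
    Real.exp (-t) * f x

/-- A nonlinear averaging operator on functions on a vertex set `V`. Encoding the graph and its
averaging rule in one operator lets the rule vary from vertex to vertex. -/
structure IsMeanOperator {V : Type*} (A : (V → ℝ) → V → ℝ) : Prop where
  monotone : Monotone A
  map_const (c : ℝ) : A (Function.const V c) = Function.const V c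

/-- The operator `K_f` of a general operator `A` on functions on `V`, whose fixed points are the
mild solutions of `∂ₜ u = A u - u` with initial datum `f`. -/
noncomputable def duhamel {V : Type*} (A : (V → ℝ) → V → ℝ) (f : V → ℝ) (u : V → ℝ → ℝ)
    (x : V) (t : ℝ) : ℝ :=
  (∫ z in (0 : ℝ)..t, exp (z - t) * A (fun y => u y z) x) + exp (-t) * f x

/-- The conjugate of `A`, which exchanges subsolutions and supersolutions. -/
def negConj {V : Type*} (A : (V → ℝ) → V → ℝ) (v : V → ℝ) : V → ℝ :=
  -A (-v)

section MaximumPrinciple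

variable {V : Type*} {A : (V → ℝ) → V → ℝ} {f : V → ℝ} {u : V → ℝ → ℝ}

theorem IsMeanOperator.apply_le (hA : IsMeanOperator A) {v : V → ℝ} {c : ℝ} (hv : ∀ y, v y ≤ c)
    (x : V) : A v x ≤ c :=
  (hA.monotone (show v ≤ Function.const V c from hv) x).trans_eq (congrFun (hA.map_const c) x)

theorem negConj_neg (A : (V → ℝ) → V → ℝ) (v : V → ℝ) : negConj A (-v) = -A v := by
  rw [negConj, neg_neg]

theorem IsMeanOperator.negConj (hA : IsMeanOperator A) : IsMeanOperator (negConj A) where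
  monotone _ _ hvw := neg_le_neg (hA.monotone (neg_le_neg hvw))
  map_const c := (congrArg Neg.neg (hA.map_const (-c))).trans (funext fun _ => neg_neg c)

theorem negConj_slice_neg (A : (V → ℝ) → V → ℝ) (u : V → ℝ → ℝ) (x : V) (z : ℝ) :
    negConj A (fun y => (-u) y z) x = -A (fun y => u y z) x :=
  congrFun (negConj_neg A fun y => u y z) x

theorem duhamel_negConj (A : (V → ℝ) → V → ℝ) (f : V → ℝ) (u : V → ℝ → ℝ) (x : V) (t : ℝ) :
    duhamel (negConj A) (-f) (-u) x t = -duhamel A f u x t := by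
  simp only [duhamel, negConj_slice_neg]
  simp only [Pi.neg_apply, mul_neg, intervalIntegral.integral_neg, neg_add]

theorem integral_exp_sub_mul_const (t c : ℝ) :
    ∫ z in (0 : ℝ)..t, exp (z - t) * c = (1 - exp (-t)) * c := by
  rw [intervalIntegral.integral_mul_const, intervalIntegral.integral_comp_sub_right exp,
    integral_exp, sub_self, exp_zero, zero_sub]

theorem duhamel_le (hA : IsMeanOperator A) {x : V} {t b c : ℝ} (ht : 0 ≤ t) (hfb : f x ≤ b)
    (huc : ∀ y, ∀ z ∈ Set.Icc 0 t, u y z ≤ c)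
    (hint : IntervalIntegrable (fun z => A (fun y => u y z) x) volume 0 t) :
    duhamel A f u x t ≤ (1 - exp (-t)) * c + exp (-t) * b := by
  have hkernel : Continuous fun z => exp (z - t) := by fun_prop
  rw [← integral_exp_sub_mul_const]
  refine add_le_add ?_ (mul_le_mul_of_nonneg_left hfb (exp_pos _).le)
  refine intervalIntegral.integral_mono_on ht (hint.continuousOn_mul hkernel.continuousOn)
    ((hkernel.mul continuous_const).intervalIntegrable _ _) fun z hz => ?_
  exact mul_le_mul_of_nonneg_left (hA.apply_le (fun y => huc y z hz) x) (exp_pos _).le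

theorem le_of_le_duhamel (hA : IsMeanOperator A) {b : ℝ} (hfb : ∀ x, f x ≤ b)
    (hub : ∀ T, ∃ M, ∀ x, ∀ t ∈ Set.Icc 0 T, u x t ≤ M)
    (hint : ∀ x, ∀ t ≥ 0, IntervalIntegrable (fun z => A (fun y => u y z) x) volume 0 t)
    (hsub : ∀ x, ∀ t ≥ 0, u x t ≤ duhamel A f u x t) (x : V) {T : ℝ} (hT : 0 ≤ T) :
    u x T ≤ b := by
  obtain ⟨M, hM⟩ := hub T
  let w : V × Set.Icc 0 T → ℝ := fun p => u p.1 p.2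
  have hw : BddAbove (Set.range w) := ⟨M, Set.forall_mem_range.2 fun p => hM p.1 p.2 p.2.2⟩
  have le_sup (y : V) (t : ℝ) (ht : t ∈ Set.Icc 0 T) : u y t ≤ ⨆ p, w p :=
    le_ciSup hw (y, ⟨t, ht⟩)
  refine (le_sup x T ⟨hT, le_rfl⟩).trans ?_
  by_contra! hb
  have : Nonempty (V × Set.Icc 0 T) := ⟨(x, ⟨T, hT, le_rfl⟩)⟩
  have sup_le : ⨆ p, w p ≤ (1 - exp (-T)) * (⨆ p, w p) + exp (-T) * b := by
    refine ciSup_le fun ⟨y, t, ht⟩ => ?_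
    have hexp : exp (-T) ≤ exp (-t) := exp_le_exp.2 (neg_le_neg ht.2)
    calc u y t ≤ duhamel A f u y t := hsub y t ht.1
      _ ≤ (1 - exp (-t)) * (⨆ p, w p) + exp (-t) * b :=
        duhamel_le hA ht.1 (hfb y) (fun y' z hz => le_sup y' z ⟨hz.1, hz.2.trans ht.2⟩)
          (hint y t ht.1)
      _ ≤ (1 - exp (-T)) * (⨆ p, w p) + exp (-T) * b := by
        linarith [mul_le_mul_of_nonneg_right hexp (sub_nonneg.2 hb.le)]
  linarith [mul_pos (exp_pos (-T)) (sub_pos.2 hb)]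

theorem le_of_duhamel_le (hA : IsMeanOperator A) {a : ℝ} (haf : ∀ x, a ≤ f x)
    (hlb : ∀ T, ∃ M, ∀ x, ∀ t ∈ Set.Icc 0 T, M ≤ u x t)
    (hint : ∀ x, ∀ t ≥ 0, IntervalIntegrable (fun z => A (fun y => u y z) x) volume 0 t)
    (hsuper : ∀ x, ∀ t ≥ 0, duhamel A f u x t ≤ u x t) (x : V) {T : ℝ} (hT : 0 ≤ T) :
    a ≤ u x T := by
  have hub_neg (T : ℝ) : ∃ M, ∀ y, ∀ t ∈ Set.Icc 0 T, (-u) y t ≤ M :=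
    let ⟨M, hM⟩ := hlb T
    ⟨-M, fun y t ht => neg_le_neg (hM y t ht)⟩
  have hint_neg (y : V) (t : ℝ) (ht : t ≥ 0) :
      IntervalIntegrable (fun z => negConj A (fun y' => (-u) y' z) y) volume 0 t := by
    simp only [negConj_slice_neg]
    exact (hint y t ht).neg
  have hsub_neg (y : V) (t : ℝ) (ht : t ≥ 0) :
      (-u) y t ≤ duhamel (negConj A) (-f) (-u) y t := by
    rw [duhamel_negConj]
    exact neg_le_neg (hsuper y t ht)
  exact neg_le_neg_iff.1 <|
    le_of_le_duhamel hA.negConj (fun y => neg_le_neg (haf y)) hub_neg hint_neg hsub_neg x hT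

theorem statement2_general (hA : IsMeanOperator A) {a b : ℝ} (hf : ∀ x, f x ∈ Set.Icc a b)
    (hub : ∀ T, ∃ M, ∀ x, ∀ t ∈ Set.Icc 0 T, |u x t| ≤ M)
    (hint : ∀ x, ∀ t ≥ 0, IntervalIntegrable (fun z => A (fun y => u y z) x) volume 0 t)
    (hK : ∀ x, ∀ t ≥ 0, u x t = duhamel A f u x t) (x : V) {t : ℝ} (ht : 0 ≤ t) :
    u x t ∈ Set.Icc a b := by
  have hlower (T : ℝ) : ∃ M, ∀ x, ∀ t ∈ Set.Icc 0 T, M ≤ u x t :=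
    let ⟨M, hM⟩ := hub T
    ⟨-M, fun x t ht => neg_le_of_abs_le (hM x t ht)⟩
  have hupper (T : ℝ) : ∃ M, ∀ x, ∀ t ∈ Set.Icc 0 T, u x t ≤ M :=
    (hub T).imp fun M hM x t ht => le_of_abs_le (hM x t ht)
  exact ⟨le_of_duhamel_le hA (fun y => (hf y).1) hlower hint (fun y s hs => (hK y s hs).ge) x ht,
    le_of_le_duhamel hA (fun y => (hf y).2) hupper hint (fun y s hs => (hK y s hs).le) x ht⟩

end MaximumPrinciple

theorem intervalIntegrable_comp_pi {ι : Type*} {F : (ι → ℝ) → ℝ} (hF : Continuous F)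
    {g : ι → ℝ → ℝ} {a b : ℝ} (hg : ∀ i, ContinuousOn (g i) (Set.uIcc a b)) :
    IntervalIntegrable (fun z => F fun i => g i z) volume a b :=
  (hF.comp_continuousOn (continuousOn_pi.2 hg)).intervalIntegrable

section Tree

variable {m : ℕ} {F : (Fin m → ℝ) → ℝ}

theorem IsAveraging.map_const (hF : IsAveraging m F) (c : ℝ) : F (fun _ => c) = c := by
  obtain ⟨-, -, hone, hsmul, -⟩ := hF
  simpa only [mul_one, hone] using hsmul c fun _ => 1

theorem IsAveraging.isMeanOperator (hF : IsAveraging m F) :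
    IsMeanOperator fun (v : List (Fin m) → ℝ) x => F fun i => v (x ++ [i]) where
  monotone := by
    obtain ⟨-, -, -, -, -, -, hmono⟩ := hF
    exact fun v w hvw x => hmono _ _ fun i => hvw (x ++ [i])
  map_const c := funext fun _ => hF.map_const c

end Tree

/-- any bounded solution of `u = K_f u` with bounded initial datum `f`
satisfies `|u(x,t)| ≤ sup_y |f(y)|` on `𝕋_m × [0,∞)`. -/
theorem statement2 (m : ℕ) (hm : 2 ≤ m) (F : (Fin m → ℝ) → ℝ) (hF : IsAveraging m F)
    (f : List (Fin m) → ℝ) (hf : ∃ M : ℝ, ∀ x, |f x| ≤ M)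
    (u : List (Fin m) → ℝ → ℝ)
    (hub : ∃ M : ℝ, ∀ x, ∀ t ≥ (0:ℝ), |u x t| ≤ M)
    (huc : ∀ x, ContinuousOn (u x) (Set.Ici (0:ℝ)))
    (hK : ∀ x, ∀ t ≥ (0:ℝ), u x t = Kop m F f u x t) :
    ∀ x, ∀ t ≥ (0:ℝ), |u x t| ≤ ⨆ y : List (Fin m), |f y| := by
  intro x t ht
  have hf_le_sup (y : List (Fin m)) : |f y| ≤ ⨆ y, |f y| :=
    le_ciSup (f := fun y => |f y|) (hf.imp fun _ hM => Set.forall_mem_range.2 hM) y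
  have hint (y : List (Fin m)) (s : ℝ) (hs : 0 ≤ s) :
      IntervalIntegrable (fun z => F fun i => u (y ++ [i]) z) volume 0 s :=
    intervalIntegrable_comp_pi hF.1 fun i =>
      (huc (y ++ [i])).mono (Set.uIcc_of_le hs ▸ Set.Icc_subset_Ici_self)
  exact abs_le.2 <| statement2_general hF.isMeanOperator (fun y => abs_le.1 (hf_le_sup y))
    (fun _ => hub.imp fun _ hM y s hs => hM y s hs.1) hint hK x ht
end

section
/- Let m ≥ 2, let F be an averaging operator, and let n ∈ ℕ, n ≥ 1. Define f_n : 𝕋_m → ℝ by f_n(x) := n! if l(x) = n and f_n(x) := 0 otherwise, and define u_n : 𝕋_m × [0,∞) → ℝ by u_n(x,t) := e^{−t} · (n!/(n−l(x))!) · t^{n−l(x)} if l(x) ≤ n and u_n(x,t) := 0 if l(x) > n. Then u_n(x,0) = f_n(x) for all x; for every x ∈ 𝕋_m and t ∈ (0,∞) the derivative ∂_t u_n(x,t) exists and equals F(u_n((x,0),t),…,u_n((x,m−1),t)) − u_n(x,t); and for every t ≥ n, sup_{x ∈ 𝕋_m} |u_n(x,t)| = t^n e^{−t}. -/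
open MeasureTheory Real

/-!
Let `p(t) = t ^ n`, so that `u_n(x, t) = e ^ (-t) p⁽ˡ⁾(t)` for `x` at level `l`. The successors of
`x` all carry the same value `e ^ (-t) p⁽ˡ⁺¹⁾(t)`, which is therefore what any mean `F` of them
returns, and the equation is the product rule. At `t = 0` only the `n`-th derivative of `p`
survives. For `t ≥ n` each of the `l` factors of `n (n - 1) ⋯ (n - l + 1)` is at most `t`, so
`p⁽ˡ⁾(t) ≤ t ^ n` and the supremum is attained at the root.
-/

theorem IsAveraging.apply_const {m : ℕ} {F : (Fin m → ℝ) → ℝ} (hF : IsAveraging m F) (c : ℝ) :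
    F (fun _ => c) = c := by
  obtain ⟨-, -, map_one, map_mul, -⟩ := hF
  simpa [map_one] using map_mul c (fun _ => 1)

section RadialSolution

variable {ι : Type*}

/-- The solution of `∂ₜ u(x, t) = F(u((x, ·), t)) - u(x, t)` on the tree of lists over `ι` that
depends on the vertex only through its level and equals `e ^ (-t) g(t)` at the root, for `g` smooth
and `F` fixing constants. -/
noncomputable def radialSolution (g : ℝ → ℝ) (x : List ι) (t : ℝ) : ℝ :=
  exp (-t) * iteratedDeriv x.length g t

theorem hasDerivAt_radialSolution {F : (ι → ℝ) → ℝ} (hF : ∀ c, F (fun _ => c) = c) {g : ℝ → ℝ}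
    {x : List ι} (hg : ContDiff ℝ (x.length + 1) g) (t : ℝ) :
    HasDerivAt (radialSolution g x)
      (F (fun i => radialSolution g (x ++ [i]) t) - radialSolution g x t) t := by
  have hexp : HasDerivAt (fun s : ℝ => exp (-s)) (-exp (-t)) t := by
    simpa using (hasDerivAt_neg t).exp
  have hiter : HasDerivAt (iteratedDeriv x.length g) (iteratedDeriv (x.length + 1) g t) t := by
    rw [iteratedDeriv_succ]
    exact (hg.differentiable_iteratedDeriv x.length
      (by exact_mod_cast x.length.lt_succ_self) t).hasDerivAt
  refine (hexp.mul hiter).congr_deriv ?_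
  simp only [radialSolution, List.length_append, List.length_singleton, hF]
  ring

theorem descFactorial_mul_pow_le_pow {R : Type*} [Semiring R] [PartialOrder R] [IsOrderedRing R]
    {n : ℕ} {t : R} (ht : (n : R) ≤ t) (l : ℕ) : n.descFactorial l * t ^ (n - l) ≤ t ^ n := by
  have ht₀ : 0 ≤ t := n.cast_nonneg.trans ht
  obtain hl | hl := le_or_gt l n
  · calc (n.descFactorial l : R) * t ^ (n - l)
        ≤ (n : R) ^ l * t ^ (n - l) := by
          gcongr
          exact_mod_cast Nat.mono_cast (α := R) (n.descFactorial_le_pow l)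
      _ ≤ t ^ l * t ^ (n - l) := by gcongr
      _ = t ^ n := by rw [← pow_add, Nat.add_sub_cancel' hl]
  · rw [Nat.descFactorial_of_lt hl, Nat.cast_zero, zero_mul]
    exact pow_nonneg ht₀ n

theorem radialSolution_pow (n : ℕ) (x : List ι) (t : ℝ) :
    radialSolution (· ^ n) x t =
      if x.length ≤ n then
        exp (-t) * ((n.factorial : ℝ) / ((n - x.length).factorial : ℝ)) * t ^ (n - x.length)
      else 0 := by
  rw [radialSolution, iteratedDeriv_pow]
  split_ifs with hx
  · have hquot : (n.factorial : ℝ) / ((n - x.length).factorial : ℝ) = n.descFactorial x.length := by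
      rw [div_eq_iff (by positivity), mul_comm]
      exact_mod_cast (Nat.factorial_mul_descFactorial hx).symm
    rw [hquot, mul_assoc]
  · simp [Nat.descFactorial_of_lt (not_le.mp hx)]

theorem radialSolution_pow_apply_zero (n : ℕ) (x : List ι) :
    radialSolution (· ^ n) x 0 = if x.length = n then (n.factorial : ℝ) else 0 := by
  simp only [radialSolution, iteratedDeriv_fun_pow_zero, neg_zero, exp_zero, one_mul]
  norm_cast

theorem isGreatest_abs_radialSolution_pow {n : ℕ} {t : ℝ} (ht : (n : ℝ) ≤ t) :
    IsGreatest (Set.range fun x : List ι => |radialSolution (· ^ n) x t|) (t ^ n * exp (-t)) := by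
  have ht₀ : 0 ≤ t := n.cast_nonneg.trans ht
  refine ⟨⟨[], ?_⟩, ?_⟩
  · simp [radialSolution, abs_of_nonneg ht₀, mul_comm]
  · rintro _ ⟨x, rfl⟩
    dsimp only
    rw [radialSolution, iteratedDeriv_pow, abs_of_nonneg (by positivity), mul_comm]
    gcongr
    exact descFactorial_mul_pow_le_pow ht x.length

theorem statement12_general {F : (ι → ℝ) → ℝ} (hF : ∀ c, F (fun _ => c) = c) (n : ℕ)
    (fn : List ι → ℝ) (hfn : ∀ x, fn x = if x.length = n then (n.factorial : ℝ) else 0)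
    (un : List ι → ℝ → ℝ)
    (hun : ∀ x t, un x t =
      if x.length ≤ n then
        exp (-t) * ((n.factorial : ℝ) / ((n - x.length).factorial : ℝ)) * t ^ (n - x.length)
      else 0) :
    (∀ x, un x 0 = fn x) ∧
    (∀ x t, HasDerivAt (un x) (F (fun i => un (x ++ [i]) t) - un x t) t) ∧
    (∀ t : ℝ, (n : ℝ) ≤ t →
      IsGreatest (Set.range fun x => |un x t|) (t ^ n * exp (-t))) := by
  obtain rfl : un = radialSolution (· ^ n) := by
    ext x t
    rw [hun, radialSolution_pow]
  exact ⟨fun x => by rw [radialSolution_pow_apply_zero, hfn],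
    fun x t => hasDerivAt_radialSolution hF (by fun_prop) t,
    fun t ht => isGreatest_abs_radialSolution_pow ht⟩

end RadialSolution

/-- for `f_n = n! 𝟙_{l(x)=n}`, the function
`u_n(x,t) = e^{−t} (n!/(n−l(x))!) t^{n−l(x)}` (for `l(x) ≤ n`, and `0` otherwise)
has initial value `f_n`, solves the equation, and `sup_x |u_n(x,t)| = tⁿ e^{−t}`
for `t ≥ n`. -/
theorem statement12 (m : ℕ) (hm : 2 ≤ m) (F : (Fin m → ℝ) → ℝ) (hF : IsAveraging m F)
    (n : ℕ) (hn : 1 ≤ n)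
    (fn : List (Fin m) → ℝ)
    (hfn : ∀ x : List (Fin m), fn x = if x.length = n then (n.factorial : ℝ) else 0)
    (un : List (Fin m) → ℝ → ℝ)
    (hun : ∀ (x : List (Fin m)) (t : ℝ),
      un x t = if x.length ≤ n then
          Real.exp (-t) * ((n.factorial : ℝ) / ((n - x.length).factorial : ℝ)) *
            t ^ (n - x.length)
        else 0) :
    (∀ x : List (Fin m), un x 0 = fn x) ∧
    (∀ (x : List (Fin m)), ∀ t > (0:ℝ),
      HasDerivAt (un x) (F (fun i => un (x ++ [i]) t) - un x t) t) ∧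
    (∀ t : ℝ, (n : ℝ) ≤ t →
      (⨆ x : List (Fin m), |un x t|) = t ^ n * Real.exp (-t)) := by
  obtain ⟨initial, equation, greatest⟩ := statement12_general hF.apply_const n fn hfn un hun
  exact ⟨initial, fun x t _ => equation x t, fun t ht => (greatest t ht).csSup_eq⟩
end

section
/- Let m ≥ 2, let F be an averaging operator, and let f : 𝕋_m → ℝ be bounded with finite support, f not identically zero, so that a(f) ≥ 1 and μ(f) = a(f) − 1. If u : 𝕋_m × [0,∞) → ℝ is bounded on 𝕋_m × [0,T] for every T > 0, continuous in t for each x, and satisfies u = K_f u, then u(x,t) = 0 for all t ≥ 0 and all x with l(x) ≥ a(f), and u(x,t) = f(x) e^{−t} for all t ≥ 0 and all x with l(x) = μ(f). -/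
open MeasureTheory Real

/-- `a(f)`: the least `j` such that `f` vanishes on all vertices of level `≥ j`. -/
noncomputable def aOf (m : ℕ) (f : List (Fin m) → ℝ) : ℕ :=
  sInf {j : ℕ | ∀ x : List (Fin m), j ≤ x.length → f x = 0}

/-- `μ(f) = a(f) − 1` if `a(f) > 0` and `μ(f) = 0` otherwise
(truncated subtraction on `ℕ`). -/
noncomputable def muOf (m : ℕ) (f : List (Fin m) → ℝ) : ℕ := aOf m f - 1

/-!
A solution at a vertex depends only on the initial datum at that vertex and its descendants.
If the datum vanishes on all of these, then feeding a bound `C * s ^ k` on the descendants back into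
the integral equation improves it to `L * C * s ^ (k + 1) / (k + 1)`, where `L` is the growth
constant of `F`. Hence `|u| ≤ M * (L * s) ^ k / k!` for every `k`, which forces `u = 0`.
Consequently, if the datum vanishes on the proper descendants of `x`, the integral in the
equation at `x` is zero and only `e^{-t} f(x)` remains.
-/

namespace IsAveraging

variable {m : ℕ} {F : (Fin m → ℝ) → ℝ}

lemma apply_const_s17 (hF : IsAveraging m F) (c : ℝ) : F (fun _ => c) = c := by
  obtain ⟨-, -, map_one, map_mul, -⟩ := hF
  simpa only [mul_one, map_one] using map_mul c (fun _ => 1)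

lemma abs_apply_le_norm (hF : IsAveraging m F) (v : Fin m → ℝ) : |F v| ≤ ‖v‖ := by
  have apply_const_s17 := hF.apply_const_s17
  obtain ⟨-, -, -, -, -, -, mono⟩ := hF
  have coord_bounds (j : Fin m) : -‖v‖ ≤ v j ∧ v j ≤ ‖v‖ := abs_le.mp (norm_le_pi_norm v j)
  refine abs_le.mpr ⟨?_, ?_⟩
  · simpa only [apply_const_s17] using mono (fun _ => -‖v‖) v fun j => (coord_bounds j).1
  · simpa only [apply_const_s17] using mono v (fun _ => ‖v‖) fun j => (coord_bounds j).2

end IsAveraging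

lemma abs_integral_exp_sub_mul_le {g : ℝ → ℝ} {C t : ℝ} {k : ℕ} (ht : 0 ≤ t)
    (hg : ∀ z ∈ Set.Ioc 0 t, |g z| ≤ C * z ^ k) :
    |∫ z in (0 : ℝ)..t, exp (z - t) * g z| ≤ C * t ^ (k + 1) / (k + 1) := by
  have integrand_le (z : ℝ) (hz : z ∈ Set.Ioc 0 t) : ‖exp (z - t) * g z‖ ≤ C * z ^ k := by
    have exp_le_one : exp (z - t) ≤ 1 := exp_le_one_iff.mpr (sub_nonpos.mpr hz.2)
    calc ‖exp (z - t) * g z‖ = exp (z - t) * |g z| := by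
          rw [norm_mul, norm_eq_abs, norm_eq_abs, abs_exp]
      _ ≤ |g z| := mul_le_of_le_one_left (abs_nonneg _) exp_le_one
      _ ≤ C * z ^ k := hg z hz
  calc |∫ z in (0 : ℝ)..t, exp (z - t) * g z| ≤ ∫ z in (0 : ℝ)..t, C * z ^ k :=
        intervalIntegral.norm_integral_le_of_norm_le ht (.of_forall integrand_le)
          (Continuous.intervalIntegrable (by fun_prop) _ _)
    _ = C * t ^ (k + 1) / (k + 1) := by
        rw [intervalIntegral.integral_const_mul, integral_pow, zero_pow k.succ_ne_zero, sub_zero,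
          mul_div_assoc]

/-- `u` is a solution of `u = K_f u` which is bounded on `𝕋_m × [0, T]` for every `T > 0`.
Integrability is part of the notion because the integral in `Kop` is `0` by convention when the
integrand is not integrable. -/
structure IsSolution {m : ℕ} (F : (Fin m → ℝ) → ℝ) (f : List (Fin m) → ℝ)
    (u : List (Fin m) → ℝ → ℝ) : Prop where
  bounded : ∀ T > (0 : ℝ), ∃ M : ℝ, ∀ x, ∀ t ∈ Set.Icc (0 : ℝ) T, |u x t| ≤ M
  intervalIntegrable : ∀ x, ∀ t ≥ (0 : ℝ),
    IntervalIntegrable (fun z => exp (z - t) * F (fun i => u (x ++ [i]) z)) volume 0 t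
  eq_Kop : ∀ x, ∀ t ≥ (0 : ℝ), u x t = Kop m F f u x t

section Solution

variable {m : ℕ} {F : (Fin m → ℝ) → ℝ} {f : List (Fin m) → ℝ} {u : List (Fin m) → ℝ → ℝ}

namespace IsSolution

lemma of_continuousOn (hF : Continuous F)
    (hub : ∀ T > (0 : ℝ), ∃ M : ℝ, ∀ x, ∀ t ∈ Set.Icc (0 : ℝ) T, |u x t| ≤ M)
    (huc : ∀ x, ContinuousOn (u x) (Set.Ici (0 : ℝ)))
    (hK : ∀ x, ∀ t ≥ (0 : ℝ), u x t = Kop m F f u x t) : IsSolution F f u where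
  bounded := hub
  intervalIntegrable x t ht := by
    have children_continuousOn :
        ContinuousOn (fun z => fun i => u (x ++ [i]) z) (Set.uIcc 0 t) := by
      rw [Set.uIcc_of_le ht]
      exact continuousOn_pi.mpr fun i => (huc _).mono Set.Icc_subset_Ici_self
    have weight_continuous : Continuous fun z => exp (z - t) := by fun_prop
    exact (weight_continuous.continuousOn.mul
      (hF.comp_continuousOn children_continuousOn)).intervalIntegrable
  eq_Kop := hK

variable {L : NNReal}

lemma abs_le_pow_div_factorial (hu : IsSolution F f u) (hF : ∀ v, |F v| ≤ L * ‖v‖)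
    {x : List (Fin m)} (hf : ∀ y, f (x ++ y) = 0) {T M : ℝ}
    (hM : ∀ y, ∀ s ∈ Set.Icc 0 T, |u (x ++ y) s| ≤ M) (k : ℕ) :
    ∀ y, ∀ s ∈ Set.Icc 0 T, |u (x ++ y) s| ≤ M * (L * s) ^ k / k.factorial := by
  induction k with
  | zero => simpa only [pow_zero, mul_one, Nat.factorial_zero, Nat.cast_one, div_one] using hM
  | succ k ih =>
    intro y s hs
    have average_le (z : ℝ) (hz : z ∈ Set.Ioc 0 s) :
        |F (fun i => u (x ++ y ++ [i]) z)| ≤ L * (M * L ^ k / k.factorial) * z ^ k := by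
      have hzT : z ∈ Set.Icc 0 T := ⟨hz.1.le, hz.2.trans hs.2⟩
      have bound_nonneg : 0 ≤ M * (L * z) ^ k / k.factorial := (abs_nonneg _).trans (ih y z hzT)
      have children_le : ‖fun i => u (x ++ y ++ [i]) z‖ ≤ M * (L * z) ^ k / k.factorial :=
        (pi_norm_le_iff_of_nonneg bound_nonneg).mpr fun i => by
          simpa only [List.append_assoc, norm_eq_abs] using ih (y ++ [i]) z hzT
      calc |F (fun i => u (x ++ y ++ [i]) z)| ≤ L * (M * (L * z) ^ k / k.factorial) :=
            (hF _).trans (mul_le_mul_of_nonneg_left children_le L.coe_nonneg)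
        _ = L * (M * L ^ k / k.factorial) * z ^ k := by ring
    calc |u (x ++ y) s| = |∫ z in (0 : ℝ)..s, exp (z - s) * F (fun i => u (x ++ y ++ [i]) z)| := by
          rw [hu.eq_Kop _ s hs.1, Kop, hf, mul_zero, add_zero]
      _ ≤ L * (M * L ^ k / k.factorial) * s ^ (k + 1) / (k + 1) :=
          abs_integral_exp_sub_mul_le hs.1 average_le
      _ = M * (L * s) ^ (k + 1) / (k + 1).factorial := by
          rw [Nat.factorial_succ]
          push_cast
          field_simp
          ring

lemma eq_zero_of_forall_append_eq_zero (hu : IsSolution F f u) (hF : ∀ v, |F v| ≤ L * ‖v‖)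
    {x : List (Fin m)} (hf : ∀ y, f (x ++ y) = 0) {t : ℝ} (ht : 0 ≤ t) : u x t = 0 := by
  obtain ⟨M, hM⟩ := hu.bounded (t + 1) (by positivity)
  have picard_bound (k : ℕ) : |u x t| ≤ M * ((L * t) ^ k / k.factorial) := by
    simpa only [List.append_nil, mul_div_assoc] using
      hu.abs_le_pow_div_factorial hF hf (fun y => hM (x ++ y)) k [] t ⟨ht, by linarith⟩
  have bound_tendsto_zero :
      Filter.Tendsto (fun k : ℕ => M * ((L * t) ^ k / k.factorial)) Filter.atTop (nhds 0) := by
    simpa only [mul_zero] using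
      (FloorSemiring.tendsto_pow_div_factorial_atTop (L * t)).const_mul M
  exact abs_nonpos_iff.mp (ge_of_tendsto' bound_tendsto_zero picard_bound)

end IsSolution

theorem statement17_general {L : NNReal} (hF : ∀ v, |F v| ≤ L * ‖v‖) (hu : IsSolution F f u)
    {x : List (Fin m)} (hf : ∀ y ≠ [], f (x ++ y) = 0) {t : ℝ} (ht : 0 ≤ t) :
    u x t = f x * exp (-t) := by
  have map_zero : F 0 = 0 := by simpa using hF 0
  have children_eq_zero (z : ℝ) (hz : 0 ≤ z) : (fun i => u (x ++ [i]) z) = 0 := by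
    funext i
    refine hu.eq_zero_of_forall_append_eq_zero hF (fun y => ?_) hz
    rw [List.append_assoc]
    exact hf _ (List.cons_ne_nil i y)
  have integral_eq_zero :
      ∫ z in (0 : ℝ)..t, exp (z - t) * F (fun i => u (x ++ [i]) z) = 0 := by
    refine intervalIntegral.integral_zero_ae (.of_forall fun z hz => ?_)
    rw [Set.uIoc_of_le ht] at hz
    rw [children_eq_zero z hz.1.le, map_zero, mul_zero]
  rw [hu.eq_Kop x t ht, Kop, integral_eq_zero, zero_add, mul_comm]

end Solution

section FiniteSupport

variable {m : ℕ} {f : List (Fin m) → ℝ}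

lemma eq_zero_of_aOf_le_length (hsupp : ∃ n : ℕ, ∀ x : List (Fin m), n ≤ x.length → f x = 0)
    {x : List (Fin m)} (hx : aOf m f ≤ x.length) : f x = 0 :=
  Nat.sInf_mem hsupp x hx

lemma one_le_aOf (hsupp : ∃ n : ℕ, ∀ x : List (Fin m), n ≤ x.length → f x = 0)
    (hne : ∃ x, f x ≠ 0) : 1 ≤ aOf m f := by
  obtain ⟨x, hx⟩ := hne
  by_contra! aOf_lt_one
  exact hx (eq_zero_of_aOf_le_length hsupp (by lia))

lemma IsSolution.eq_mul_exp_of_muOf_le_length {F : (Fin m → ℝ) → ℝ} {L : NNReal}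
    {u : List (Fin m) → ℝ → ℝ} (hu : IsSolution F f u) (hF : ∀ v, |F v| ≤ L * ‖v‖)
    (hsupp : ∃ n : ℕ, ∀ x : List (Fin m), n ≤ x.length → f x = 0)
    {x : List (Fin m)} (hx : muOf m f ≤ x.length) {t : ℝ} (ht : 0 ≤ t) :
    u x t = f x * exp (-t) := by
  refine statement17_general hF hu (fun y hy => eq_zero_of_aOf_le_length hsupp ?_) ht
  have y_length_pos : 0 < y.length := List.length_pos_of_ne_nil hy
  rw [List.length_append]
  rw [muOf] at hx
  lia

end FiniteSupport

/-- for a finitely supported, not identically zero initial datum `f`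
(so `a(f) ≥ 1` and `μ(f) = a(f) − 1`), the solution of `u = K_f u` vanishes at all
levels `≥ a(f)` and equals `f(x) e^{−t}` at level `μ(f)`. -/
theorem statement17 (m : ℕ) (hm : 2 ≤ m) (F : (Fin m → ℝ) → ℝ) (hF : IsAveraging m F)
    (f : List (Fin m) → ℝ) (hf : ∃ M : ℝ, ∀ x, |f x| ≤ M)
    (hsupp : ∃ n : ℕ, ∀ x : List (Fin m), n ≤ x.length → f x = 0)
    (hne : ∃ x : List (Fin m), f x ≠ 0)
    (u : List (Fin m) → ℝ → ℝ)
    (hub : ∀ T > (0:ℝ), ∃ M : ℝ, ∀ x, ∀ t ∈ Set.Icc (0:ℝ) T, |u x t| ≤ M)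
    (huc : ∀ x, ContinuousOn (u x) (Set.Ici (0:ℝ)))
    (hK : ∀ x, ∀ t ≥ (0:ℝ), u x t = Kop m F f u x t) :
    1 ≤ aOf m f ∧ muOf m f = aOf m f - 1 ∧
    (∀ x : List (Fin m), aOf m f ≤ x.length → ∀ t ≥ (0:ℝ), u x t = 0) ∧
    (∀ x : List (Fin m), x.length = muOf m f → ∀ t ≥ (0:ℝ),
      u x t = f x * Real.exp (-t)) := by
  have hu : IsSolution F f u := .of_continuousOn hF.1 hub huc hK
  have growth : ∀ v, |F v| ≤ (1 : NNReal) * ‖v‖ := by simpa using hF.abs_apply_le_norm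
  have u_eq {x : List (Fin m)} (hx : muOf m f ≤ x.length) {t : ℝ} (ht : 0 ≤ t) :
      u x t = f x * exp (-t) := hu.eq_mul_exp_of_muOf_le_length growth hsupp hx ht
  refine ⟨one_le_aOf hsupp hne, rfl, fun x hx t ht => ?_, fun x hx t ht => u_eq hx.ge ht⟩
  rw [u_eq ((Nat.sub_le _ _).trans hx) ht, eq_zero_of_aOf_le_length hsupp hx, zero_mul]
end
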